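/- Let (f_n) be a sequence in L⁰(λ) and define g_k = inf_{n,m>k}(f_n − f_m). If the sequence (g_k) λ-converges to 0, then liminf_n f_n = limsup_n f_n, λ-a.s. -/

import Mathlib

/-!
If `n, m > k` then `f m ≤ f n - g k` pointwise. Taking the limsup in `m` and then the liminf in `n`
shows that the limsup can exceed the liminf by more than `c` only where `-g k > c`. The outer
measure of that set tends to `0` along `k`, whereas the exceptional set does not depend on `k`.
-/

open Set Filter Topology

namespace FA

/-- An algebra of subsets of `Ω`. -/
structure SetAlg (Ω : Type*) where
  sets : Set (Set Ω)
  empty_mem : ∅ ∈ sets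
  compl_mem : ∀ ⦃A⦄, A ∈ sets → Aᶜ ∈ sets
  union_mem : ∀ ⦃A B⦄, A ∈ sets → B ∈ sets → A ∪ B ∈ sets

/-- A bounded, finitely additive real-valued set function on the algebra `𝒜`,
i.e. an element of `ba(𝒜)`. -/
structure BAMeasure {Ω : Type*} (𝒜 : SetAlg Ω) where
  toFun : Set Ω → ℝ
  map_empty : toFun ∅ = 0
  additive : ∀ ⦃A B : Set Ω⦄, A ∈ 𝒜.sets → B ∈ 𝒜.sets → Disjoint A B →
      toFun (A ∪ B) = toFun A + toFun B
  bounded : ∃ M : ℝ, ∀ A ∈ 𝒜.sets, |toFun A| ≤ M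

variable {Ω : Type*} {𝒜 : SetAlg Ω}

/-- Total variation `|λ|(A) = λ⁺(A) + λ⁻(A)`. -/
noncomputable def var (lam : BAMeasure 𝒜) (A : Set Ω) : ℝ :=
  sSup {x | ∃ B ∈ 𝒜.sets, B ⊆ A ∧ x = lam.toFun B} +
  sSup {x | ∃ B ∈ 𝒜.sets, B ⊆ A ∧ x = -lam.toFun B}

/-- The outer measure `|λ|*(B) = inf {|λ|(A) : A ∈ 𝒜, B ⊆ A}`. -/
noncomputable def outer (lam : BAMeasure 𝒜) (B : Set Ω) : ℝ :=
  sInf {x | ∃ A ∈ 𝒜.sets, B ⊆ A ∧ x = var lam A}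

/-- `𝒜`-simple functions. -/
def IsSimple (𝒜 : SetAlg Ω) (f : Ω → ℝ) : Prop :=
  (Set.range f).Finite ∧ ∀ r : ℝ, f ⁻¹' {r} ∈ 𝒜.sets

/-- `λ`-convergence: `(f n)` converges to `g` in `λ`-measure. -/
def LConv (lam : BAMeasure 𝒜) (f : ℕ → Ω → ℝ) (g : Ω → ℝ) : Prop :=
  ∀ c > (0:ℝ), Tendsto (fun n => outer lam {ω | c < |f n ω - g ω|}) atTop (𝓝 0)

/-- `λ`-Cauchy sequences. -/
def LCauchy (lam : BAMeasure 𝒜) (f : ℕ → Ω → ℝ) : Prop :=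
  ∀ c > (0:ℝ), ∀ ε > (0:ℝ), ∃ N : ℕ, ∀ p q : ℕ,
    outer lam {ω | c < |f (N + p) ω - f (N + q) ω|} < ε

/-- `L⁰(λ)`: `λ`-limits of sequences of `𝒜`-simple functions. -/
def L0 (lam : BAMeasure 𝒜) : Set (Ω → ℝ) :=
  {f | ∃ s : ℕ → Ω → ℝ, (∀ n, IsSimple 𝒜 (s n)) ∧ LConv lam s f}

/-- The metric of `L⁰(λ)`: `d(f,g) = inf {c + |λ|*(|f-g| ≥ c) : c > 0}`. -/
noncomputable def dL0 (lam : BAMeasure 𝒜) (f g : Ω → ℝ) : ℝ :=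
  sInf {x | ∃ c > (0:ℝ), x = c + outer lam {ω | c ≤ |f ω - g ω|}}

/-- A set `K` is bounded in `L⁰(λ)` if `lim_{c→∞} sup_{f∈K} |λ|*(|f|>c) = 0`. -/
def BddL0 (lam : BAMeasure 𝒜) (K : Set (Ω → ℝ)) : Prop :=
  ∀ ε > (0:ℝ), ∃ c₀ : ℝ, ∀ c ≥ c₀, ∀ f ∈ K, outer lam {ω | c < |f ω|} < ε

/-- The nonnegative elements of `L⁰(λ)`. -/
def L0pos (lam : BAMeasure 𝒜) : Set (Ω → ℝ) := {f ∈ L0 lam | ∀ ω, 0 ≤ f ω}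

/-- The elementary integral of a simple function with respect to a set function. -/
noncomputable def simpleIntegral (m : Set Ω → ℝ) (f : Ω → ℝ) : ℝ :=
  ∑ᶠ r : ℝ, r * m (f ⁻¹' {r})

/-- Dunford–Schwartz integrability: there is a sequence of simple functions converging to `f`
in `λ`-measure which is Cauchy in mean. -/
def MemL1 (lam : BAMeasure 𝒜) (f : Ω → ℝ) : Prop :=
  ∃ s : ℕ → Ω → ℝ, (∀ n, IsSimple 𝒜 (s n)) ∧ LConv lam s f ∧
    ∀ ε > (0:ℝ), ∃ N : ℕ, ∀ m ≥ N, ∀ n ≥ N,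
      simpleIntegral (var lam) (fun ω => |s m ω - s n ω|) < ε

/-- `L¹(λ)`. -/
def L1 (lam : BAMeasure 𝒜) : Set (Ω → ℝ) := {f | MemL1 lam f}

open scoped Classical in
/-- The Dunford–Schwartz integral `∫ f dλ`. -/
noncomputable def integral (lam : BAMeasure 𝒜) (f : Ω → ℝ) : ℝ :=
  if h : MemL1 lam f then
    limUnder atTop (fun n => simpleIntegral lam.toFun (h.choose n))
  else 0

open scoped Classical in
/-- The `L¹(λ)` seminorm `∫ |f| d|λ|`. -/
noncomputable def l1Norm (lam : BAMeasure 𝒜) (f : Ω → ℝ) : ℝ :=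
  if h : MemL1 lam f then
    limUnder atTop (fun n => simpleIntegral (var lam) (fun ω => |h.choose n ω|))
  else 0

/-- A set is bounded in `L¹(μ)` if the integrals `∫|f| d|μ|` are uniformly bounded. -/
def BddL1 (mu : BAMeasure 𝒜) (K : Set (Ω → ℝ)) : Prop :=
  ∃ M : ℝ, ∀ f ∈ K, l1Norm mu f ≤ M

/-- Finitely additive probability measures. -/
def IsFAProb (mu : BAMeasure 𝒜) : Prop :=
  mu.toFun Set.univ = 1 ∧ ∀ A ∈ 𝒜.sets, 0 ≤ mu.toFun A

/-- `μ ∈ 𝔓_*(λ)`: a finitely additive probability with `|μ| ≤ c |λ|` and the same null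
sets as `λ`. -/
def PStar (lam mu : BAMeasure 𝒜) : Prop :=
  IsFAProb mu ∧ (∃ c : ℝ, 0 ≤ c ∧ ∀ A ∈ 𝒜.sets, var mu A ≤ c * var lam A) ∧
  ∀ A ∈ 𝒜.sets, (mu.toFun A = 0 ↔ var lam A = 0)

/-- `μ ∈ 𝔓_*(λ; K)`. -/
def PStarWith (lam : BAMeasure 𝒜) (K : Set (Ω → ℝ)) (mu : BAMeasure 𝒜) : Prop :=
  PStar lam mu ∧ K ⊆ L1 mu ∧ BddL1 mu K

/-- `f` is a `λ`-a.s. lower bound of `K`. -/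
def ASLowerBound (lam : BAMeasure 𝒜) (f : Ω → ℝ) (K : Set (Ω → ℝ)) : Prop :=
  ∀ c > (0:ℝ), ∀ k ∈ K, outer lam {ω | k ω < f ω - c} = 0

/-- Absolute continuity `μ ≪ λ` for bounded finitely additive set functions. -/
def AbsCont (mu lam : BAMeasure 𝒜) : Prop :=
  ∀ ε > (0:ℝ), ∃ δ > (0:ℝ), ∀ A ∈ 𝒜.sets, var lam A < δ → var mu A < ε

/-- `λ ∈ ba₀(𝒜)`: the range of `λ` is finite. -/
def FiniteRange (lam : BAMeasure 𝒜) : Prop := (lam.toFun '' 𝒜.sets).Finite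

/-- `μ ∈ ba₀(λ)`. -/
def BA0rel (lam mu : BAMeasure 𝒜) : Prop := FiniteRange mu ∧ AbsCont mu lam

/-- Strong continuity: arbitrarily fine finite partitions. -/
def StronglyContinuous (lam : BAMeasure 𝒜) : Prop :=
  ∀ ε > (0:ℝ), ∃ (N : ℕ) (A : Fin N → Set Ω), (∀ n, A n ∈ 𝒜.sets) ∧
    Pairwise (Function.onFun Disjoint A) ∧ (⋃ n, A n) = Set.univ ∧
    ∀ n, var lam (A n) < ε

/-- Orthogonality of bounded finitely additive set functions. -/
def Orthogonal (mu nu : BAMeasure 𝒜) : Prop :=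
  ∀ ε > (0:ℝ), ∃ A ∈ 𝒜.sets, var mu A < ε ∧ var nu Aᶜ < ε

/-- Strong discontinuity: orthogonal to every strongly continuous element of `ba(𝒜)`. -/
def StronglyDiscontinuous (mu : BAMeasure 𝒜) : Prop :=
  ∀ nu : BAMeasure 𝒜, StronglyContinuous nu → Orthogonal mu nu

/-- Countable additivity of `λ` on the algebra `𝒜`. -/
def CountablyAdditive (lam : BAMeasure 𝒜) : Prop :=
  ∀ A : ℕ → Set Ω, (∀ n, A n ∈ 𝒜.sets) → Pairwise (Function.onFun Disjoint A) →
    (⋃ n, A n) ∈ 𝒜.sets → HasSum (fun n => lam.toFun (A n)) (lam.toFun (⋃ n, A n))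

/-- `𝒜` is a σ-algebra. -/
def IsSigmaAlg (𝒜 : SetAlg Ω) : Prop :=
  ∀ A : ℕ → Set Ω, (∀ n, A n ∈ 𝒜.sets) → (⋃ n, A n) ∈ 𝒜.sets

/-- Linearity of a functional on `L⁰(λ)`. -/
def LinearOnL0 (lam : BAMeasure 𝒜) (φ : (Ω → ℝ) → ℝ) : Prop :=
  (∀ f ∈ L0 lam, ∀ g ∈ L0 lam, φ (f + g) = φ f + φ g) ∧
  (∀ a : ℝ, ∀ f ∈ L0 lam, φ (a • f) = a * φ f)

/-- Continuity of a functional on `L⁰(λ)` with respect to the metric `d`. -/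
def ContinuousOnL0 (lam : BAMeasure 𝒜) (φ : (Ω → ℝ) → ℝ) : Prop :=
  ∀ f ∈ L0 lam, ∀ ε > (0:ℝ), ∃ δ > (0:ℝ), ∀ g ∈ L0 lam, dL0 lam g f < δ → |φ g - φ f| < ε

theorem var_nonneg (lam : BAMeasure 𝒜) (A : Set Ω) : 0 ≤ var lam A := by
  refine add_nonneg (Real.sSup_nonneg' ⟨0, ⟨∅, 𝒜.empty_mem, empty_subset A, ?_⟩, le_rfl⟩)
    (Real.sSup_nonneg' ⟨0, ⟨∅, 𝒜.empty_mem, empty_subset A, ?_⟩, le_rfl⟩)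
  · exact lam.map_empty.symm
  · rw [lam.map_empty, neg_zero]

theorem outer_nonneg (lam : BAMeasure 𝒜) (B : Set Ω) : 0 ≤ outer lam B := by
  apply Real.sInf_nonneg
  rintro _ ⟨A, -, -, rfl⟩
  exact var_nonneg lam A

theorem outer_mono (lam : BAMeasure 𝒜) {B C : Set Ω} (hBC : B ⊆ C) :
    outer lam B ≤ outer lam C := by
  have univ_mem : univ ∈ 𝒜.sets := compl_empty ▸ 𝒜.compl_mem 𝒜.empty_mem
  apply csInf_le_csInf
  · refine ⟨0, ?_⟩
    rintro _ ⟨A, -, -, rfl⟩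
    exact var_nonneg lam A
  · exact ⟨_, univ, univ_mem, subset_univ C, rfl⟩
  · rintro _ ⟨A, hA, hCA, rfl⟩
    exact ⟨A, hA, hBC.trans hCA, rfl⟩

theorem limsup_le_liminf_add_of_eventually_le_add {ι : Type*} {l : Filter ι} {u : ι → EReal}
    {c : ℝ} (h : ∀ᶠ n in l, ∀ᶠ m in l, u m ≤ u n + c) : limsup u l ≤ liminf u l + c := by
  have sub_le_iff (x y : EReal) : x - c ≤ y ↔ x ≤ y + c :=
    EReal.sub_le_iff_le_add (.inl (EReal.coe_ne_bot c)) (.inl (EReal.coe_ne_top c))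
  rw [← sub_le_iff]
  refine le_liminf_of_le (h := h.mono fun n hn => ?_)
  exact (sub_le_iff _ _).2 (limsup_le_of_le (h := hn))

theorem limsup_le_liminf_add_of_neg_iInf_sub_le {ι : Type*} [Preorder ι] [NoMaxOrder ι]
    {u : ι → ℝ} {k : ι} {c : ℝ}
    (h : -(⨅ (n : ι) (m : ι) (_ : k < n) (_ : k < m), ((u n - u m : ℝ) : EReal)) ≤ c) :
    limsup (fun n => (u n : EReal)) atTop ≤ liminf (fun n => (u n : EReal)) atTop + c := by
  have le_add (n m : ι) (hn : k < n) (hm : k < m) : u m ≤ u n + c := by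
    have neg_le_sub : ((-c : ℝ) : EReal) ≤ ((u n - u m : ℝ) : EReal) :=
      (EReal.neg_le_of_neg_le h).trans (iInf₂_le_of_le n m (iInf₂_le hn hm))
    linarith [EReal.coe_le_coe_iff.1 neg_le_sub]
  apply limsup_le_liminf_add_of_eventually_le_add
  filter_upwards [eventually_gt_atTop k] with n hn
  filter_upwards [eventually_gt_atTop k] with m hm
  exact_mod_cast le_add n m hn hm

theorem stmt_18_general {ι : Type*} [Preorder ι] [IsDirectedOrder ι] [Nonempty ι] [NoMaxOrder ι]
    (lam : BAMeasure 𝒜) (fs : ι → Ω → ℝ) (g : ι → Ω → EReal)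
    (hg : ∀ k ω, g k ω = ⨅ (n : ι) (m : ι) (_ : k < n) (_ : k < m),
      ((fs n ω - fs m ω : ℝ) : EReal))
    (hconv : ∀ c > (0 : ℝ), Tendsto
      (fun k => outer lam {ω | (c : EReal) < max (g k ω) (-(g k ω))}) atTop (𝓝 0))
    (c : ℝ) (hc : 0 < c) :
    outer lam {ω | liminf (fun n => (fs n ω : EReal)) atTop + (c : EReal)
      < limsup (fun n => (fs n ω : EReal)) atTop} = 0 := by
  refine le_antisymm (ge_of_tendsto' (hconv c hc) fun k => outer_mono lam fun ω hω => ?_)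
    (outer_nonneg lam _)
  have lt_neg : (c : EReal) < -(g k ω) := by
    contrapose! hω
    rw [hg] at hω
    exact not_lt_of_ge (limsup_le_liminf_add_of_neg_iInf_sub_le hω)
  exact lt_max_of_lt_right lt_neg

/-- Theorem 30: with `g_k = inf_{n,m>k} (f_n - f_m)`, if `(g_k)` `λ`-converges to `0` then
`liminf_n f_n = limsup_n f_n` `λ`-a.s. -/
theorem stmt_18 {Ω : Type*} {𝒜 : SetAlg Ω} (lam : BAMeasure 𝒜)
    (fs : ℕ → Ω → ℝ) (hfs : ∀ n, fs n ∈ L0 lam)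
    (g : ℕ → Ω → EReal)
    (hg : ∀ k ω, g k ω = ⨅ (n : ℕ) (m : ℕ) (_ : k < n) (_ : k < m),
      ((fs n ω - fs m ω : ℝ) : EReal))
    (hconv : ∀ c > (0:ℝ), Tendsto
      (fun k => outer lam {ω | ((c : ℝ) : EReal) < max (g k ω) (-(g k ω))})
      atTop (𝓝 0)) :
    ∀ c > (0:ℝ), outer lam
      {ω | Filter.liminf (fun n => ((fs n ω : ℝ) : EReal)) atTop + ((c : ℝ) : EReal)
        < Filter.limsup (fun n => ((fs n ω : ℝ) : EReal)) atTop} = 0 := by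
  exact stmt_18_general lam fs g hg hconv

end FA
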